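/- Commutation of counting quantifiers with conjunction and disjunction: let A, B be CPL formulas, a a name with a ∉ FN(A), and q a rational with 0 < q ≤ 1. Then for every finite name set X with FN(A) ∪ (FN(B) \ {a}) ⊆ X and a ∉ X: A ∧ C^q_a B ≡_X C^q_a(A ∧ B); A ∨ C^q_a B ≡_X C^q_a(A ∨ B); A ∧ D^q_a B ≡_X D^q_a(¬A ∨ B); and A ∨ D^q_a B ≡_X D^q_a(¬A ∧ B). -/

import Mathlib

open MeasureTheory

/-- The Cantor space `2^ω` of infinite binary sequences. -/
abbrev Cantor : Type := ℕ → Bool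

/-- Rational numbers in the unit interval `[0,1]`. -/
abbrev I01 : Type := (Set.Icc (0 : ℚ) 1)

/-- The value of a rational `q ∈ [0,1]` as an extended nonnegative real. -/
noncomputable def qq (q : I01) : ENNReal := ENNReal.ofReal (q.1 : ℝ)

/-- `μ` is the fair-coin Bernoulli (uniform) product measure on the Cantor space:
it is a probability measure giving each cylinder fixing the values on a finite set `s`
of coordinates the measure `2^{-|s|}`. -/
def IsCantorMeasure (μ : Measure Cantor) : Prop :=
  IsProbabilityMeasure μ ∧
    ∀ (s : Finset ℕ) (v : ℕ → Bool),
      μ {f : Cantor | ∀ i ∈ s, f i = v i} = (2 : ENNReal)⁻¹ ^ s.card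

/-- Valuations of the names in a finite name set `X`: the space `(2^ω)^X`. -/
abbrev Val (X : Finset ℕ) : Type := {a : ℕ // a ∈ X} → Cantor

/-- `combine f g` is the common extension `f + g` of valuations `f ∈ (2^ω)^X` and
`g ∈ (2^ω)^Y`: it agrees with `f` on `X` and with `g` on `Y` (when `X` and `Y` are
disjoint this is the `f + g` of the paper). -/
def combine {X Y : Finset ℕ} (f : Val X) (g : Val Y) : Val (X ∪ Y) :=
  fun a =>
    if h : a.1 ∈ Y then g ⟨a.1, h⟩
    else f ⟨a.1, (Finset.mem_union.mp a.2).resolve_right h⟩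

/-- The `f`-projection `Π_f(𝒳) = {g ∈ (2^ω)^Y | f + g ∈ 𝒳}` of a set
`𝒳 ⊆ (2^ω)^{X∪Y}` along `f ∈ (2^ω)^X`. -/
def proj {X Y : Finset ℕ} (f : Val X) (S : Set (Val (X ∪ Y))) : Set (Val Y) :=
  {g | combine f g ∈ S}

/-- The fair-coin Bernoulli (uniform) product measure on `(2^ω)^X`, obtained as the
pushforward of the Cantor measure `μ` along the (coordinate-separating) injection
determined by the pairing function: the coordinates `(a, i)` are i.i.d. fair coins. -/
noncomputable def cantorPi (μ : Measure Cantor) (X : Finset ℕ) : Measure (Val X) :=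
  Measure.map (fun (g : Cantor) (a : {x : ℕ // x ∈ X}) (i : ℕ) => g (Nat.pair a.1 i)) μ

/-- Named Boolean formulas `b ::= xᵢᵃ | ⊤ | ⊥ | ¬b | b ∧ c | b ∨ c`.
`NBF.var i a` is the named propositional variable `xᵢᵃ`. -/
inductive NBF : Type where
  | var : ℕ → ℕ → NBF
  | tt : NBF
  | ff : NBF
  | neg : NBF → NBF
  | conj : NBF → NBF → NBF
  | disj : NBF → NBF → NBF
deriving DecidableEq

/-- The set of (free) names occurring in a named Boolean formula. -/
def NBF.FN : NBF → Finset ℕ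
  | .var _ a => {a}
  | .tt => ∅
  | .ff => ∅
  | .neg b => b.FN
  | .conj b c => b.FN ∪ c.FN
  | .disj b c => b.FN ∪ c.FN

/-- The interpretation `⟦b⟧_X ⊆ (2^ω)^X` of a named Boolean formula with `FN(b) ⊆ X`. -/
def NBF.semN : NBF → (X : Finset ℕ) → Set (Val X)
  | .var i a, X => {f | ∀ h : a ∈ X, f ⟨a, h⟩ i = true}
  | .tt, _ => Set.univ
  | .ff, _ => ∅
  | .neg b, X => (b.semN X)ᶜ
  | .conj b c, X => b.semN X ∩ c.semN X
  | .disj b c, X => b.semN X ∪ c.semN X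

/-- The disjunction `⋁_{i<k} c i` of a finite family of named Boolean formulas. -/
def NBF.bigDisj {k : ℕ} (c : Fin k → NBF) : NBF :=
  (List.ofFn c).foldr NBF.disj NBF.ff

/-- Formulas of (multivariate) counting propositional logic CPL:
`A ::= i_a | ¬A | A ∧ B | A ∨ B | C^q_a A | D^q_a A`, with `i ∈ ℕ`, `a` a name and
`q` a rational in `[0,1]`.  `CPL.atom i a` is the named atom `i_a`, and
`CPL.cnt q a A` (resp. `CPL.dnt q a A`) is `C^q_a A` (resp. `D^q_a A`). -/
inductive CPL : Type where
  | atom : ℕ → ℕ → CPL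
  | neg : CPL → CPL
  | conj : CPL → CPL → CPL
  | disj : CPL → CPL → CPL
  | cnt : I01 → ℕ → CPL → CPL
  | dnt : I01 → ℕ → CPL → CPL
deriving DecidableEq

/-- The set of free names of a CPL formula; `a` is bound in `C^q_a A` and `D^q_a A`. -/
def CPL.FN : CPL → Finset ℕ
  | .atom _ a => {a}
  | .neg A => A.FN
  | .conj A B => A.FN ∪ B.FN
  | .disj A B => A.FN ∪ B.FN
  | .cnt _ a A => A.FN \ {a}
  | .dnt _ a A => A.FN \ {a}

/-- The interpretation `⟦A⟧_X ⊆ (2^ω)^X` of a CPL formula `A` with `FN(A) ⊆ X`: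
`⟦C^q_a A⟧_X = {f | μ(Π_f(⟦A⟧_{X∪{a}})) ≥ q}` and
`⟦D^q_a A⟧_X = {f | μ(Π_f(⟦A⟧_{X∪{a}})) < q}`. -/
noncomputable def CPL.semN (μ : Measure Cantor) : CPL → (X : Finset ℕ) → Set (Val X)
  | .atom i a, X => {f | ∀ h : a ∈ X, f ⟨a, h⟩ i = true}
  | .neg A, X => (CPL.semN μ A X)ᶜ
  | .conj A B, X => CPL.semN μ A X ∩ CPL.semN μ B X
  | .disj A B, X => CPL.semN μ A X ∪ CPL.semN μ B X
  | .cnt q a A, X =>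
      {f | qq q ≤ cantorPi μ {a} (proj (Y := {a}) f (CPL.semN μ A (X ∪ {a})))}
  | .dnt q a A, X =>
      {f | cantorPi μ {a} (proj (Y := {a}) f (CPL.semN μ A (X ∪ {a}))) < qq q}

/-!
A formula's interpretation depends only on its free names, so for `a ∉ FN(A)` every section of
`⟦A⟧_{X ∪ {a}}` over `f ∈ (2^ω)^X` is empty or everything, according to whether `f ∈ ⟦A⟧_X`.
Intersecting with, or joining to, such a section changes the measure only by making it `0` or `1`,
and the threshold `q ∈ (0, 1]` separates these two values. The two identities for `D` are those
for `C` applied to `¬A`, complemented.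
-/

section Threshold

variable {α : Type*} [MeasurableSpace α] {ν : Measure α} {r : ENNReal}

lemma le_measure_const_inter_iff (p : Prop) (s : Set α) (hr : 0 < r) :
    r ≤ ν ({_x | p} ∩ s) ↔ p ∧ r ≤ ν s := by
  by_cases hp : p <;> simp [hp, hr.ne']

lemma le_measure_const_union_iff (p : Prop) (s : Set α) (hr : r ≤ ν Set.univ) :
    r ≤ ν ({_x | p} ∪ s) ↔ p ∨ r ≤ ν s := by
  by_cases hp : p <;> simp [hp, hr]

end Threshold

lemma qq_pos {q : I01} (hq : 0 < q.1) : 0 < qq q :=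
  ENNReal.ofReal_pos.mpr (Rat.cast_pos.mpr hq)

lemma qq_le_one (q : I01) : qq q ≤ 1 :=
  ENNReal.ofReal_le_one.mpr (by exact_mod_cast q.2.2)

instance isProbabilityMeasure_cantorPi (μ : Measure Cantor) [IsProbabilityMeasure μ]
    (X : Finset ℕ) : IsProbabilityMeasure (cantorPi μ X) :=
  Measure.isProbabilityMeasure_map <| Measurable.aemeasurable <|
    measurable_pi_lambda _ fun _ => measurable_pi_lambda _ fun _ => measurable_pi_apply _

section Valuations

variable {X X' Y s : Finset ℕ} {f : Val X} {f' : Val X'}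

lemma combine_apply_of_mem (f : Val X) (g : Val Y) {c : ℕ} (hc : c ∈ Y) :
    combine f g ⟨c, Finset.mem_union_right X hc⟩ = g ⟨c, hc⟩ :=
  dif_pos hc

lemma combine_apply_of_notMem (f : Val X) (g : Val Y) {c : ℕ} (hX : c ∈ X) (hY : c ∉ Y) :
    combine f g ⟨c, Finset.mem_union_left Y hX⟩ = f ⟨c, hX⟩ :=
  dif_neg hY

/-- Two valuations, possibly over different name sets, agree on the names in `s`. The definition
includes that both of them are defined there, that is, `s ⊆ X` and `s ⊆ X'`. -/
def Val.AgreeOn (s : Finset ℕ) (f : Val X) (f' : Val X') : Prop :=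
  ∀ c ∈ s, ∃ (h : c ∈ X) (h' : c ∈ X'), f ⟨c, h⟩ = f' ⟨c, h'⟩

lemma Val.AgreeOn.mono {t : Finset ℕ} (h : Val.AgreeOn t f f') (hst : s ⊆ t) :
    Val.AgreeOn s f f' :=
  fun c hc => h c (hst hc)

lemma Val.AgreeOn.combine (h : Val.AgreeOn (s \ Y) f f') (g : Val Y) :
    Val.AgreeOn s (combine f g) (combine f' g) := by
  intro c hc
  by_cases hY : c ∈ Y
  · exact ⟨_, _, (combine_apply_of_mem f g hY).trans (combine_apply_of_mem f' g hY).symm⟩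
  · obtain ⟨hX, hX', hff'⟩ := h c (Finset.mem_sdiff.mpr ⟨hc, hY⟩)
    refine ⟨Finset.mem_union_left Y hX, Finset.mem_union_left Y hX', ?_⟩
    rw [combine_apply_of_notMem f g hX hY, combine_apply_of_notMem f' g hX' hY, hff']

lemma Val.agreeOn_combine_left (f : Val X) (g : Val Y) (hX : s ⊆ X) (hY : Disjoint s Y) :
    Val.AgreeOn s (combine f g) f :=
  fun _ hc => ⟨_, hX hc, combine_apply_of_notMem f g (hX hc) (Finset.disjoint_left.mp hY hc)⟩

end Valuations

namespace CPL

section FreeNames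

variable {X X' Y : Finset ℕ}

theorem mem_semN_iff_of_agreeOn (μ : Measure Cantor) (A : CPL) {f : Val X} {f' : Val X'}
    (h : Val.AgreeOn A.FN f f') : f ∈ semN μ A X ↔ f' ∈ semN μ A X' := by
  induction A generalizing X X' with
  | atom i a =>
    obtain ⟨hX, hX', hff'⟩ := h a (Finset.mem_singleton_self a)
    simp [semN, hX, hX', hff']
  | neg A ih => exact not_congr (ih h)
  | conj A B ihA ihB =>
    exact and_congr (ihA (h.mono Finset.subset_union_left)) (ihB (h.mono Finset.subset_union_right))
  | disj A B ihA ihB =>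
    exact or_congr (ihA (h.mono Finset.subset_union_left)) (ihB (h.mono Finset.subset_union_right))
  | cnt q a A ih | dnt q a A ih =>
    have proj_eq : proj (Y := {a}) f (semN μ A (X ∪ {a})) = proj f' (semN μ A (X' ∪ {a})) :=
      Set.ext fun g => ih (h.combine g)
    simp only [semN, Set.mem_ofPred_eq, proj_eq]

lemma proj_semN_of_disjoint (μ : Measure Cantor) {A : CPL} (hX : A.FN ⊆ X) (hY : Disjoint A.FN Y)
    (f : Val X) : proj f (semN μ A (X ∪ Y)) = {_g | f ∈ semN μ A X} :=
  Set.ext fun g => mem_semN_iff_of_agreeOn μ A (Val.agreeOn_combine_left f g hX hY)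

end FreeNames

section Commutations

variable (μ : Measure Cantor) {A : CPL} (B : CPL) {a : ℕ} {X : Finset ℕ}

lemma semN_dnt (q : I01) : semN μ (.dnt q a B) X = (semN μ (.cnt q a B) X)ᶜ := by
  ext f
  simp only [semN, Set.mem_ofPred_eq, Set.mem_compl_iff, not_le]

theorem semN_conj_cnt {q : I01} (hq : 0 < q.1) (haA : a ∉ A.FN) (hX : A.FN ⊆ X) :
    semN μ (.conj A (.cnt q a B)) X = semN μ (.cnt q a (.conj A B)) X := by
  ext f
  have proj_A := proj_semN_of_disjoint μ hX (Finset.disjoint_singleton_right.mpr haA) f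
  change _ ↔ qq q ≤ cantorPi μ {a} (proj f (semN μ A (X ∪ {a})) ∩ proj f (semN μ B (X ∪ {a})))
  rw [proj_A, le_measure_const_inter_iff _ _ (qq_pos hq)]
  rfl

theorem semN_disj_cnt [IsProbabilityMeasure μ] (q : I01) (haA : a ∉ A.FN) (hX : A.FN ⊆ X) :
    semN μ (.disj A (.cnt q a B)) X = semN μ (.cnt q a (.disj A B)) X := by
  ext f
  have proj_A := proj_semN_of_disjoint μ hX (Finset.disjoint_singleton_right.mpr haA) f
  change _ ↔ qq q ≤ cantorPi μ {a} (proj f (semN μ A (X ∪ {a})) ∪ proj f (semN μ B (X ∪ {a})))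
  rw [proj_A, le_measure_const_union_iff _ _ ((qq_le_one q).trans_eq measure_univ.symm)]
  rfl

theorem semN_conj_dnt [IsProbabilityMeasure μ] (q : I01) (haA : a ∉ A.FN) (hX : A.FN ⊆ X) :
    semN μ (.conj A (.dnt q a B)) X = semN μ (.dnt q a (.disj (.neg A) B)) X :=
  calc
    semN μ A X ∩ semN μ (.dnt q a B) X
      = ((semN μ A X)ᶜ ∪ semN μ (.cnt q a B) X)ᶜ := by
        rw [semN_dnt, Set.compl_union, compl_compl]
    _ = (semN μ (.cnt q a (.disj (.neg A) B)) X)ᶜ :=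
        congrArg compl (semN_disj_cnt μ (A := .neg A) B q haA hX)
    _ = semN μ (.dnt q a (.disj (.neg A) B)) X := (semN_dnt μ _ q).symm

theorem semN_disj_dnt {q : I01} (hq : 0 < q.1) (haA : a ∉ A.FN) (hX : A.FN ⊆ X) :
    semN μ (.disj A (.dnt q a B)) X = semN μ (.dnt q a (.conj (.neg A) B)) X :=
  calc
    semN μ A X ∪ semN μ (.dnt q a B) X
      = ((semN μ A X)ᶜ ∩ semN μ (.cnt q a B) X)ᶜ := by
        rw [semN_dnt, Set.compl_inter, compl_compl]
    _ = (semN μ (.cnt q a (.conj (.neg A) B)) X)ᶜ :=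
        congrArg compl (semN_conj_cnt μ (A := .neg A) B hq haA hX)
    _ = semN μ (.dnt q a (.conj (.neg A) B)) X := (semN_dnt μ _ q).symm

end Commutations

end CPL

theorem cpl_commutations_general
    (μ : Measure Cantor) [IsProbabilityMeasure μ]
    (A B : CPL) (a : ℕ) (q : I01) (hq : 0 < q.1) (haA : a ∉ A.FN)
    (X : Finset ℕ) (hX : A.FN ⊆ X) :
    CPL.semN μ (.conj A (.cnt q a B)) X = CPL.semN μ (.cnt q a (.conj A B)) X ∧
    CPL.semN μ (.disj A (.cnt q a B)) X = CPL.semN μ (.cnt q a (.disj A B)) X ∧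
    CPL.semN μ (.conj A (.dnt q a B)) X = CPL.semN μ (.dnt q a (.disj (.neg A) B)) X ∧
    CPL.semN μ (.disj A (.dnt q a B)) X = CPL.semN μ (.dnt q a (.conj (.neg A) B)) X :=
  ⟨CPL.semN_conj_cnt μ B hq haA hX, CPL.semN_disj_cnt μ B q haA hX,
    CPL.semN_conj_dnt μ B q haA hX, CPL.semN_disj_dnt μ B hq haA hX⟩

/-- **Commutations.** Let `a ∉ FN(A)` and `0 < q ≤ 1`. Then for every
finite name set `X` with `FN(A) ∪ (FN(B) \ {a}) ⊆ X` and `a ∉ X`: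
`A ∧ C^q_a B ≡_X C^q_a(A ∧ B)`, `A ∨ C^q_a B ≡_X C^q_a(A ∨ B)`,
`A ∧ D^q_a B ≡_X D^q_a(¬A ∨ B)`, and `A ∨ D^q_a B ≡_X D^q_a(¬A ∧ B)`. -/
theorem cpl_commutations
    (μ : Measure Cantor) (hμ : IsCantorMeasure μ)
    (A B : CPL) (a : ℕ) (q : I01) (hq : 0 < q.1) (haA : a ∉ A.FN)
    (X : Finset ℕ) (hX : A.FN ∪ (B.FN \ {a}) ⊆ X) (haX : a ∉ X) :
    CPL.semN μ (.conj A (.cnt q a B)) X = CPL.semN μ (.cnt q a (.conj A B)) X ∧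
    CPL.semN μ (.disj A (.cnt q a B)) X = CPL.semN μ (.cnt q a (.disj A B)) X ∧
    CPL.semN μ (.conj A (.dnt q a B)) X = CPL.semN μ (.dnt q a (.disj (.neg A) B)) X ∧
    CPL.semN μ (.disj A (.dnt q a B)) X = CPL.semN μ (.dnt q a (.conj (.neg A) B)) X := by
  have := hμ.1
  exact cpl_commutations_general μ A B a q hq haA X (Finset.union_subset_left hX)
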